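/- Let G be a finite supersolvable group and χ ∈ Irr(G) with χ(1) > 1. Then the derived length of G/Ker(χ) is at most 2·η(χ) − 1. -/

import Mathlib

open scoped Classical BigOperators

/-- Inner product of class functions on a finite group. -/
noncomputable def charInner (G : Type) [Group G] [Fintype G] (φ ψ : G → ℂ) : ℂ :=
  (Fintype.card G : ℂ)⁻¹ * ∑ g : G, φ g * (starRingEnd ℂ) (ψ g)

/-- `χ` is the character of an irreducible complex representation of `G`. -/
def IsIrrChar (G : Type) [Group G] [Fintype G] (χ : G → ℂ) : Prop :=
  ∃ V : FDRep ℂ G, CategoryTheory.Simple V ∧ V.character = χ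

/-- The number of distinct non-principal irreducible constituents of `χ ⬝ conj χ`. -/
noncomputable def etaChar (G : Type) [Group G] [Fintype G] (χ : G → ℂ) : ℕ :=
  Set.ncard {α : G → ℂ | IsIrrChar G α ∧ α ≠ (fun _ => 1) ∧
    charInner G (fun g => χ g * (starRingEnd ℂ) (χ g)) α ≠ 0}

/-- Kernel of a character, as a set. -/
def charKer (G : Type) [Group G] (χ : G → ℂ) : Set G := {g | χ g = χ 1}

/-- Induced character from a subgroup. -/
noncomputable def indChar (K : Type) [Group K] [Fintype K] (H : Subgroup K) (φ : H → ℂ) :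
    K → ℂ := fun k =>
  (Nat.card H : ℂ)⁻¹ * ∑ x : K, if h : x⁻¹ * k * x ∈ H then φ ⟨x⁻¹ * k * x, h⟩ else 0


/-- Derived length of a group. -/
noncomputable def derivedLength (G : Type) [Group G] : ℕ :=
  sInf {n | derivedSeries G n = ⊥}

/-- A finite group is supersolvable if it has a chain of normal subgroups of `G`
from `⊥` to `⊤` with cyclic factors. -/
def IsSupersolvableGroup (G : Type) [Group G] : Prop :=
  ∃ (n : ℕ) (H : Fin (n + 1) → Subgroup G),
    (∀ i, (H i).Normal) ∧ Monotone H ∧ H 0 = ⊥ ∧ H (Fin.last n) = ⊤ ∧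
    ∀ i : Fin n, ∃ g ∈ H i.succ, H i.succ ≤ H i.castSucc ⊔ Subgroup.zpowers g

/-!
Let `ρ` afford `χ`, so that `χ · conj χ` is the character of `G` acting on `End V` by conjugation.
Every subgroup `X` has a closure, the subgroup of the elements of `G` acting trivially on the
endomorphisms that commute with `X`. Enlarging a normal subgroup beyond its closure makes some
endomorphism cease to be fixed, and hence some constituent of `χ · conj χ` cease to be trivial on
the subgroup.

Let `D` be a term of the derived series not contained in a closed normal subgroup `X`.
Supersolvability yields `y ∈ D \ X` such that `X ⟨y⟩` is normal; the automorphism group of a cyclic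
group being abelian, `y` commutes modulo `X` with `[G, G]`. If an earlier term `W` of the derived
series, contained in `[G, G]` and in the closure of `X ⟨y⟩`, satisfied `y ∈ [W, W]`, then `W` would
act by scalars on some common eigenvector `b ∈ End V` of `X` and `y` that is fixed by `X` but not by
`y`, whereas `[W, W]` must fix `b`. Hence the loss of one constituent costs at most two steps of the
derived series.

Starting from the centre of `χ`, the closure of the trivial subgroup, the first enlargement loses
one of the `η(χ)` constituents and gives a subgroup whose image under `ρ` is abelian, so
`2 (η(χ) - 1) + 1` steps suffice.
-/

open scoped commutatorElement

section CyclicSections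

variable {G : Type*} [Group G]

theorem map_mk'_sup_zpowers (Q : Subgroup G) [Q.Normal] (a : G) :
    (Q ⊔ Subgroup.zpowers a).map (QuotientGroup.mk' Q) =
      Subgroup.zpowers (QuotientGroup.mk' Q a) := by
  rw [Subgroup.map_sup, MonoidHom.map_zpowers, QuotientGroup.map_mk'_self, bot_sup_eq]

theorem exists_mem_le_sup_zpowers {Q B : Subgroup G} [Q.Normal] {g : G}
    (hB : B ≤ Q ⊔ Subgroup.zpowers g) : ∃ d ∈ B, B ≤ Q ⊔ Subgroup.zpowers d := by
  have hcyclic : IsCyclic (B.map (QuotientGroup.mk' Q)) :=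
    Subgroup.isCyclic_of_le ((Subgroup.map_mono hB).trans (map_mk'_sup_zpowers Q g).le)
  obtain ⟨q, hq⟩ := (Subgroup.isCyclic_iff_exists_zpowers_eq_top _).mp hcyclic
  obtain ⟨d, hd, rfl⟩ : q ∈ B.map (QuotientGroup.mk' Q) := hq ▸ Subgroup.mem_zpowers q
  have hle := Subgroup.map_le_map_iff.mp (hq.ge.trans (map_mk'_sup_zpowers Q d).ge)
  rw [QuotientGroup.ker_mk', sup_right_comm, sup_idem] at hle
  exact ⟨d, hd, hle⟩

theorem exists_mem_sup_zpowers_eq_sup {Q B X : Subgroup G} [Q.Normal] {g : G}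
    (hB : B ≤ Q ⊔ Subgroup.zpowers g) (hX : Q ⊓ B ≤ X) :
    ∃ d ∈ B, X ⊔ Subgroup.zpowers d = X ⊔ B := by
  obtain ⟨d, hd, hBd⟩ := exists_mem_le_sup_zpowers hB
  refine ⟨d, hd, le_antisymm (sup_le_sup_left (Subgroup.zpowers_le.mpr hd) X)
    (sup_le le_sup_left fun b hb ↦ ?_)⟩
  obtain ⟨q, hq, z, hz, rfl⟩ := Subgroup.mem_sup_of_normal_left.mp (hBd hb)
  have hqB : q ∈ B := (B.mul_mem_cancel_right (Subgroup.zpowers_le.mpr hd hz)).mp hb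
  exact Subgroup.mul_mem_sup (hX ⟨hq, hqB⟩) hz

theorem commute_of_zpowers_normal {a w : G} [(Subgroup.zpowers a).Normal]
    (hw : w ∈ commutator G) : Commute a w := by
  let conj : G →* MulAut (Subgroup.zpowers a) := MulAut.conjNormal
  let e := IsCyclic.mulAutMulEquiv (Subgroup.zpowers a)
  have hker : e (conj w) = 1 :=
    Abelianization.commutator_subset_ker (e.toMonoidHom.comp conj) hw
  have hfix : conj w = 1 := by simpa using hker
  have := congrArg Subtype.val (DFunLike.congr_fun hfix ⟨a, Subgroup.mem_zpowers a⟩)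
  rw [MulAut.conjNormal_apply] at this
  exact (mul_inv_eq_iff_eq_mul.mp this).symm

theorem commutatorElement_mem_of_sup_zpowers_normal {X : Subgroup G} [X.Normal] {y w : G}
    (hy : (X ⊔ Subgroup.zpowers y).Normal) (hw : w ∈ commutator G) : ⁅y, w⁆ ∈ X := by
  let π := QuotientGroup.mk' X
  have hπ : Function.Surjective π := QuotientGroup.mk'_surjective X
  have : (Subgroup.zpowers (π y)).Normal := map_mk'_sup_zpowers X y ▸ hy.map π hπ
  have hπw : π w ∈ commutator (G ⧸ X) := by
    rw [← derivedSeries_one, ← map_derivedSeries_eq hπ, derivedSeries_one]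
    exact Subgroup.mem_map_of_mem π hw
  rw [← QuotientGroup.ker_mk' X, MonoidHom.mem_ker, map_commutatorElement,
    commutatorElement_eq_one_iff_commute]
  exact commute_of_zpowers_normal hπw

end CyclicSections

theorem IsSupersolvableGroup.exists_sup_zpowers_normal {G : Type} [Group G]
    (hss : IsSupersolvableGroup G) {X D : Subgroup G} [X.Normal] [D.Normal] (hDX : ¬ D ≤ X) :
    ∃ y ∈ D, y ∉ X ∧ (X ⊔ Subgroup.zpowers y).Normal := by
  obtain ⟨n, H, hnormal, -, hbot, htop, hcyclic⟩ := hss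
  by_contra! hno
  have hle : ∀ i, H i ⊓ D ≤ X := by
    intro i
    induction i using Fin.induction with
    | zero => simp [hbot]
    | succ i ih =>
      obtain ⟨g, -, hg⟩ := hcyclic i
      have := hnormal i.castSucc
      have := hnormal i.succ
      obtain ⟨d, ⟨-, hdD⟩, hd⟩ := exists_mem_sup_zpowers_eq_sup (B := H i.succ ⊓ D) (X := X)
        (inf_le_left.trans hg) ((inf_le_inf_left _ inf_le_right).trans ih)
      have hdX : d ∈ X := by
        by_contra hdX
        exact hno d hdD hdX (hd ▸ inferInstance)
      rw [sup_eq_left.mpr (Subgroup.zpowers_le.mpr hdX), left_eq_sup] at hd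
      exact hd
  exact hDX (by simpa [htop] using hle (Fin.last n))

section LinearAlgebra

open Module

variable {K V V' : Type*} [Field K] [AddCommGroup V] [Module K V] [AddCommGroup V'] [Module K V']

theorem exists_hasEigenvalue_ne_one_of_pow_eq_one [IsAlgClosed K] [FiniteDimensional K V]
    {T : End K V} {n : ℕ} (hn : (n : K) ≠ 0) (hpow : T ^ n = 1) (hT : T ≠ 1) :
    ∃ μ ≠ 1, T.HasEigenvalue μ := by
  by_contra! hno
  have hsemisimple : T.IsSemisimple :=
    End.isSemisimple_of_squarefree_aeval_eq_zero
      (Polynomial.separable_X_pow_sub_C 1 hn one_ne_zero).squarefree (by simp [hpow])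
  have htop := hsemisimple.iSup_eigenspace_eq_top
  have hle : ⨆ μ, T.eigenspace μ ≤ T.eigenspace 1 := iSup_le fun μ ↦ by
    rcases eq_or_ne μ 1 with rfl | hμ
    · exact le_rfl
    · exact (not_not.mp (hno μ hμ)).trans_le bot_le
  refine hT (LinearMap.ext fun v ↦ ?_)
  simpa using End.mem_eigenspace_iff.mp (hle (htop ▸ Submodule.mem_top : v ∈ _))

theorem exists_ker_lt_ker_sub_smul [IsAlgClosed K] [FiniteDimensional K V'] {b b' : V →ₗ[K] V'}
    (hb : b ≠ 0) (hker : b.ker ≤ b'.ker) (hrange : b'.range ≤ b.range) :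
    ∃ c : K, b.ker < (b' - c • b).ker := by
  let T : End K b.range :=
    (b.ker.liftQ (b'.codRestrict b.range fun v ↦ hrange ⟨v, rfl⟩) (by simpa using hker)) ∘ₗ
      b.quotKerEquivRange.symm.toLinearMap
  have hT (v : V) : (T (b.rangeRestrict v) : V') = b' v := by
    have : b.quotKerEquivRange.symm (b.rangeRestrict v) = b.ker.mkQ v := by
      rw [LinearEquiv.symm_apply_eq]; rfl
    simp [T, this]
  have : Nontrivial b.range := Submodule.nontrivial_iff_ne_bot.mpr (mt LinearMap.range_eq_bot.mp hb)
  obtain ⟨c, hc⟩ := End.exists_eigenvalue T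
  obtain ⟨⟨_, v, rfl⟩, hv⟩ := hc.exists_hasEigenvector
  have hbv : b v ≠ 0 := fun h ↦ hv.2 (Subtype.ext h)
  have hb'v : b' v = c • b v := (hT v).symm.trans (congrArg Subtype.val hv.apply_eq_smul)
  refine ⟨c, SetLike.lt_iff_le_and_exists.mpr ⟨fun u hu ↦ ?_, v, ?_, hbv⟩⟩
  · simp [LinearMap.mem_ker.mp hu, LinearMap.mem_ker.mp (hker hu)]
  · simp [hb'v]

/-- Take `b` with maximal kernel: subtracting from `b'` an eigenvalue of `b'` relative to `b` times
`b` enlarges the kernel, so the difference vanishes. -/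
theorem exists_mem_ne_zero_forall_exists_eq_smul [IsAlgClosed K] [FiniteDimensional K V]
    [FiniteDimensional K V'] {E : Submodule K (V →ₗ[K] V')} (hE : E ≠ ⊥) :
    ∃ b ∈ E, b ≠ 0 ∧ ∀ b' ∈ E, b.ker ≤ b'.ker → b'.range ≤ b.range → ∃ c : K, b' = c • b := by
  obtain ⟨a, ha, ha0⟩ := E.exists_mem_ne_zero_of_ne_bot hE
  obtain ⟨b, ⟨hbE, hb0⟩, hmax⟩ := WellFounded.has_min
    (InvImage.wf LinearMap.ker (wellFounded_gt (α := Submodule K V)))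
    {b : V →ₗ[K] V' | b ∈ E ∧ b ≠ 0} ⟨a, ha, ha0⟩
  refine ⟨b, hbE, hb0, fun b' hb' hker hrange ↦ ?_⟩
  obtain ⟨c, hc⟩ := exists_ker_lt_ker_sub_smul hb0 hker hrange
  refine ⟨c, ?_⟩
  by_contra hne
  exact hmax _ ⟨E.sub_mem hb' (E.smul_mem c hbE), sub_ne_zero.mpr hne⟩ hc

end LinearAlgebra

section FixedVectors

variable {k G V : Type*} [CommRing k] [Group G] [AddCommGroup V] [Module k V]

/-- The stabilizer of the vector `v` in the representation `σ`. A representation is not a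
`MulAction`, so `MulAction.stabilizer` does not apply. -/
def vectorStabilizer (σ : Representation k G V) (v : V) : Subgroup G where
  carrier := {g | σ g v = v}
  one_mem' := by simp
  mul_mem' {g h} hg hh := by
    rw [Set.mem_ofPred_eq] at hg hh ⊢
    rw [map_mul, Module.End.mul_apply, hh, hg]
  inv_mem' {g} hg := by
    rw [Set.mem_ofPred_eq] at hg ⊢
    conv_lhs => rw [← hg, σ.inv_self_apply]

variable (σ : Representation k G V)

@[simp]
theorem mem_vectorStabilizer {v : V} {g : G} : g ∈ vectorStabilizer σ v ↔ σ g v = v := Iff.rfl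

/-- The vectors fixed by a subgroup of the group being represented. -/
noncomputable def fixedSubmodule (X : Subgroup G) : Submodule k V :=
  Representation.invariants (σ.comp X.subtype)

variable {σ}

theorem mem_fixedSubmodule {X : Subgroup G} {v : V} :
    v ∈ fixedSubmodule σ X ↔ X ≤ vectorStabilizer σ v :=
  ⟨fun h g hg ↦ h ⟨g, hg⟩, fun h g ↦ h g.2⟩

theorem apply_mem_fixedSubmodule {X : Subgroup G} [X.Normal] (g : G) {v : V}
    (hv : v ∈ fixedSubmodule σ X) : σ g v ∈ fixedSubmodule σ X :=
  σ.le_comap_invariants X g hv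

variable (σ)

/-- The vectors fixed by a normal subgroup, as a subrepresentation. -/
noncomputable def fixedSubrepresentation (X : Subgroup G) [X.Normal] : Subrepresentation σ :=
  ⟨fixedSubmodule σ X, fun g _ hv ↦ apply_mem_fixedSubmodule g hv⟩

/-- The closure of a subgroup in the Galois connection between subgroups and the subspaces of
vectors they fix. -/
noncomputable def fixClosure (X : Subgroup G) : Subgroup G :=
  ⨅ v ∈ fixedSubmodule σ X, vectorStabilizer σ v

variable {σ}

theorem mem_fixClosure {X : Subgroup G} {g : G} :
    g ∈ fixClosure σ X ↔ ∀ v ∈ fixedSubmodule σ X, σ g v = v := by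
  simp [fixClosure, Subgroup.mem_iInf]

theorem le_fixClosure (X : Subgroup G) : X ≤ fixClosure σ X :=
  le_iInf₂ fun _ hv ↦ mem_fixedSubmodule.mp hv

theorem fixClosure_le_vectorStabilizer {X : Subgroup G} {v : V} (hv : X ≤ vectorStabilizer σ v) :
    fixClosure σ X ≤ vectorStabilizer σ v :=
  iInf₂_le v (mem_fixedSubmodule.mpr hv)

theorem fixClosure_idem (X : Subgroup G) : fixClosure σ (fixClosure σ X) = fixClosure σ X :=
  le_antisymm (le_iInf₂ fun _ hv ↦ fixClosure_le_vectorStabilizer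
    (fixClosure_le_vectorStabilizer (mem_fixedSubmodule.mp hv))) (le_fixClosure _)

instance fixClosure_normal (X : Subgroup G) [X.Normal] : (fixClosure σ X).Normal where
  conj_mem n hn g := by
    rw [mem_fixClosure] at hn ⊢
    intro v hv
    rw [map_mul, map_mul, Module.End.mul_apply, Module.End.mul_apply,
      hn _ (apply_mem_fixedSubmodule g⁻¹ hv), σ.self_inv_apply]

theorem commutator_le_vectorStabilizer {W : Subgroup G} {v : V}
    (hW : ∀ w ∈ W, ∃ c : k, σ w v = c • v) : ⁅W, W⁆ ≤ vectorStabilizer σ v := by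
  rw [Subgroup.commutator_le]
  intro g hg h hh
  obtain ⟨c, hc⟩ := hW g hg
  obtain ⟨d, hd⟩ := hW h hh
  have hcomm : σ (g * h) v = σ (h * g) v := by
    simp only [map_mul, Module.End.mul_apply, hc, hd, map_smul]
    exact smul_comm d c v
  obtain ⟨e, he⟩ := hW (h * g)⁻¹ (W.inv_mem (W.mul_mem hh hg))
  calc σ ⁅g, h⁆ v = σ (g * h) (σ (h * g)⁻¹ v) := by
        rw [← Module.End.mul_apply, ← map_mul]
        congr 2
        group
    _ = σ (h * g) (σ (h * g)⁻¹ v) := by rw [he, map_smul, map_smul, hcomm]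
    _ = v := σ.self_inv_apply _ v

theorem apply_mem_fixedSubmodule_inf_eigenspace {X : Subgroup G} [X.Normal] {y w : G} {μ : k}
    {v : V} (hw : ⁅y, w⁆ ∈ X) (hv : v ∈ fixedSubmodule σ X ⊓ Module.End.eigenspace (σ y) μ) :
    σ w v ∈ fixedSubmodule σ X ⊓ Module.End.eigenspace (σ y) μ := by
  have hwv : σ w v ∈ fixedSubmodule σ X := apply_mem_fixedSubmodule w hv.1
  refine ⟨hwv, Module.End.mem_eigenspace_iff.mpr ?_⟩
  calc σ y (σ w v) = σ ⁅y, w⁆ (σ w (σ y v)) := by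
        simp only [← Module.End.mul_apply, ← map_mul]
        congr 2
        group
    _ = μ • σ ⁅y, w⁆ (σ w v) := by
        rw [Module.End.mem_eigenspace_iff.mp hv.2, map_smul, map_smul]
    _ = μ • σ w v := by rw [mem_fixedSubmodule.mp hwv hw]

theorem exists_fixedSubmodule_inf_eigenspace_ne_bot {K V : Type*} [Field K] [IsAlgClosed K]
    [AddCommGroup V] [Module K V] [FiniteDimensional K V] {σ : Representation K G V}
    {X : Subgroup G} [X.Normal] {y : G} (hord : (orderOf y : K) ≠ 0) (hy : y ∉ fixClosure σ X) :
    ∃ μ ≠ 1, fixedSubmodule σ X ⊓ Module.End.eigenspace (σ y) μ ≠ ⊥ := by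
  let T : Module.End K (fixedSubmodule σ X) := σ.toInvariants X y
  have hpow : T ^ orderOf y = 1 :=
    (map_pow (σ.toInvariants X) y _).symm.trans
      ((congrArg (σ.toInvariants X) (pow_orderOf_eq_one y)).trans (map_one _))
  have hT : T ≠ 1 := fun h ↦ hy <| mem_fixClosure.mpr fun v hv ↦
    congrArg Subtype.val (LinearMap.congr_fun h ⟨v, hv⟩)
  obtain ⟨μ, hμ, hT⟩ := exists_hasEigenvalue_ne_one_of_pow_eq_one hord hpow hT
  obtain ⟨v, hv⟩ := hT.exists_hasEigenvector
  refine ⟨μ, hμ, (Submodule.ne_bot_iff _).mpr ⟨v, ⟨v.2, ?_⟩, fun h ↦ hv.2 (Subtype.ext h)⟩⟩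
  exact Module.End.mem_eigenspace_iff.mpr (congrArg Subtype.val hv.apply_eq_smul)

end FixedVectors

section CommutantClosure

variable {k G V : Type*} [CommRing k] [Group G] [AddCommGroup V] [Module k V]
  (ρ : Representation k G V)

theorem linHom_self_apply_eq_iff_commute {g : G} {f : Module.End k V} :
    ρ.linHom ρ g f = f ↔ Commute f (ρ g) := by
  change ρ g * f * ρ g⁻¹ = f ↔ f * ρ g = ρ g * f
  exact (ρ.asGroupHom g).mul_inv_eq_iff_eq_mul.trans eq_comm

theorem ker_linHom_self_apply (g : G) (f : Module.End k V) :
    (ρ.linHom ρ g f).ker = f.ker.map (ρ g) := by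
  ext v
  rw [LinearMap.mem_ker, Representation.linHom_apply, LinearMap.comp_apply, LinearMap.comp_apply,
    map_eq_zero_iff _ (ρ.apply_bijective g).injective]
  exact ⟨fun hv ↦ ⟨ρ g⁻¹ v, hv, ρ.self_inv_apply g v⟩, by rintro ⟨u, hu, rfl⟩; simpa using hu⟩

theorem range_linHom_self_apply (g : G) (f : Module.End k V) :
    (ρ.linHom ρ g f).range = f.range.map (ρ g) := by
  rw [Representation.linHom_apply, LinearMap.range_comp, LinearMap.range_comp_of_range_eq_top]
  exact LinearMap.range_eq_top.mpr (ρ.apply_bijective g⁻¹).surjective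

variable {ρ}

/-- The elements of `G` that commute in the representation `ρ` with every endomorphism commuting
with `X`: the closure of `X` for the action of `G` on endomorphisms by conjugation. -/
noncomputable abbrev commutantClosure (ρ : Representation k G V) (X : Subgroup G) : Subgroup G :=
  fixClosure (ρ.linHom ρ) X

theorem le_vectorStabilizer_linHom {X : Subgroup G} {f : Module.End k V} :
    X ≤ vectorStabilizer (ρ.linHom ρ) f ↔ ∀ x ∈ X, Commute f (ρ x) :=
  forall₂_congr fun _ _ ↦ linHom_self_apply_eq_iff_commute ρ

theorem commute_of_mem_commutantClosure_sup_zpowers {y g h : G}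
    (hg : g ∈ commutantClosure ρ (commutantClosure ρ ⊥ ⊔ Subgroup.zpowers y))
    (hh : h ∈ commutantClosure ρ (commutantClosure ρ ⊥ ⊔ Subgroup.zpowers y)) :
    Commute (ρ g) (ρ h) := by
  have hle {f : Module.End k V} (hf : Commute f (ρ y)) :
      commutantClosure ρ (commutantClosure ρ ⊥ ⊔ Subgroup.zpowers y) ≤
        vectorStabilizer (ρ.linHom ρ) f :=
    fixClosure_le_vectorStabilizer <| sup_le (fixClosure_le_vectorStabilizer bot_le)
      (Subgroup.zpowers_le.mpr ((linHom_self_apply_eq_iff_commute ρ).mpr hf))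
  have hyg : Commute (ρ y) (ρ g) :=
    (linHom_self_apply_eq_iff_commute ρ).mp (hle (Commute.refl (ρ y)) hg)
  exact (linHom_self_apply_eq_iff_commute ρ).mp (hle hyg.symm hh)

theorem commutator_commutantClosure_sup_zpowers_le_ker (y : G) :
    ⁅commutantClosure ρ (commutantClosure ρ ⊥ ⊔ Subgroup.zpowers y),
      commutantClosure ρ (commutantClosure ρ ⊥ ⊔ Subgroup.zpowers y)⁆ ≤ MonoidHom.ker ρ := by
  rw [Subgroup.commutator_le]
  intro g hg h hh
  have hcomm : ρ.asGroupHom ⁅g, h⁆ = 1 := by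
    rw [map_commutatorElement, commutatorElement_eq_one_iff_commute]
    exact Commute.units_val_iff.mp (commute_of_mem_commutantClosure_sup_zpowers hg hh)
  exact congrArg Units.val hcomm

end CommutantClosure

section SubmoduleStabilizer

variable {k G V : Type*} [Field k] [Group G] [AddCommGroup V] [Module k V]
  {ρ : Representation k G V}

variable (ρ) in
/-- The subgroup of the elements of the group that map the submodule `U` onto itself. -/
def submoduleStabilizer (U : Submodule k V) : Subgroup G where
  carrier := {g | U.map (ρ g) = U}
  one_mem' := by simp [Module.End.one_eq_id]
  mul_mem' {g h} hg hh := by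
    rw [Set.mem_ofPred_eq] at hg hh ⊢
    rw [map_mul, Module.End.mul_eq_comp, Submodule.map_comp, hh, hg]
  inv_mem' {g} hg := by
    rw [Set.mem_ofPred_eq] at hg ⊢
    conv_lhs => rw [← hg, ← Submodule.map_comp, ← Module.End.mul_eq_comp, ← map_mul]
    simp [Module.End.one_eq_id]

theorem mem_submoduleStabilizer {U : Submodule k V} {g : G} :
    g ∈ submoduleStabilizer ρ U ↔ U.map (ρ g) = U := Iff.rfl

theorem mem_submoduleStabilizer_ker_and_range {b : Module.End k V} (hb : b ≠ 0) {g : G} {c : k}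
    (hg : ρ.linHom ρ g b = c • b) :
    g ∈ submoduleStabilizer ρ b.ker ∧ g ∈ submoduleStabilizer ρ b.range := by
  have hc : c ≠ 0 := by
    rintro rfl
    exact hb (((ρ.linHom ρ).apply_bijective g).injective (by simpa using hg))
  simp_rw [mem_submoduleStabilizer, ← ker_linHom_self_apply, ← range_linHom_self_apply, hg]
  exact ⟨b.ker_smul c hc, b.range_smul c hc⟩

/-- By Maschke's theorem `U` is the range of a projection commuting with `X`, and every element of
the closure of `X` commutes with that projection. -/
theorem commutantClosure_le_submoduleStabilizer [Finite G] [CharZero k] {X : Subgroup G}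
    {U : Submodule k V} (hX : X ≤ submoduleStabilizer ρ U) :
    commutantClosure ρ X ≤ submoduleStabilizer ρ U := by
  let S : Subrepresentation (ρ.comp X.subtype) :=
    ⟨U, fun x _ hu ↦ (hX x.2).le (Submodule.mem_map_of_mem hu)⟩
  obtain ⟨T, hST⟩ := exists_isCompl S
  have hUT : IsCompl U T.toSubmodule :=
    ⟨disjoint_iff.mpr (congrArg Subrepresentation.toSubmodule hST.inf_eq_bot),
      codisjoint_iff.mpr (congrArg Subrepresentation.toSubmodule hST.sup_eq_top)⟩
  let p : Module.End k V := U.projection T.toSubmodule hUT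
  have hp : X ≤ vectorStabilizer (ρ.linHom ρ) p := le_vectorStabilizer_linHom.mpr fun x hx ↦ by
    rw [LinearMap.IsIdempotentElem.commute_iff (Submodule.isIdempotentElem_projection hUT),
      Submodule.range_projection, Submodule.ker_projection]
    exact ⟨S.apply_mem_toSubmodule ⟨x, hx⟩, T.apply_mem_toSubmodule ⟨x, hx⟩⟩
  intro g hg
  have hpg : ρ.linHom ρ g p = p := fixClosure_le_vectorStabilizer hp hg
  rw [mem_submoduleStabilizer, ← Submodule.range_projection hUT, ← range_linHom_self_apply, hpg]

/-- Otherwise `y` has an eigenvalue `μ ≠ 1` on the endomorphisms fixed by `X`. The `μ`-eigenspace is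
stable under `W`, and `W` also stabilizes the kernel and the range of each of its elements, because
`X` and `y` do; so `W` acts by scalars on a suitable one, which is then fixed by `⁅W, W⁆`. -/
theorem mem_commutantClosure_of_mem_sup_commutator [IsAlgClosed k] [CharZero k] [Finite G]
    [FiniteDimensional k V] {X W : Subgroup G} [X.Normal] {y : G} (hyW : ∀ w ∈ W, ⁅y, w⁆ ∈ X)
    (hW : W ≤ commutantClosure ρ (X ⊔ Subgroup.zpowers y)) (hy : y ∈ X ⊔ ⁅W, W⁆) :
    y ∈ commutantClosure ρ X := by
  by_contra hyX
  obtain ⟨μ, hμ, hE⟩ := exists_fixedSubmodule_inf_eigenspace_ne_bot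
    (Nat.cast_ne_zero.mpr (orderOf_pos y).ne') hyX
  obtain ⟨b, hbE, hb0, hbmax⟩ := exists_mem_ne_zero_forall_exists_eq_smul hE
  have hX : X ≤ vectorStabilizer (ρ.linHom ρ) b := mem_fixedSubmodule.mp hbE.1
  have hby : ρ.linHom ρ y b = μ • b := Module.End.mem_eigenspace_iff.mp hbE.2
  have hsup {U : Submodule k V}
      (h : ∀ {g c}, ρ.linHom ρ g b = c • b → g ∈ submoduleStabilizer ρ U) :
      W ≤ submoduleStabilizer ρ U :=
    hW.trans <| commutantClosure_le_submoduleStabilizer <| sup_le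
      (fun x hx ↦ h (c := 1) ((hX hx).trans (one_smul k b).symm)) (Subgroup.zpowers_le.mpr (h hby))
  have hker : W ≤ submoduleStabilizer ρ b.ker :=
    hsup fun h ↦ (mem_submoduleStabilizer_ker_and_range hb0 h).1
  have hrange : W ≤ submoduleStabilizer ρ b.range :=
    hsup fun h ↦ (mem_submoduleStabilizer_ker_and_range hb0 h).2
  have hscalar (w : G) (hw : w ∈ W) : ∃ c : k, ρ.linHom ρ w b = c • b :=
    hbmax _ (apply_mem_fixedSubmodule_inf_eigenspace (hyW w hw) hbE)
      (by rw [ker_linHom_self_apply, hker hw]) (by rw [range_linHom_self_apply, hrange hw])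
  have hyb : ρ.linHom ρ y b = b := sup_le hX (commutator_le_vectorStabilizer hscalar) hy
  exact hμ (smul_left_injective k hb0 ((hby.symm.trans hyb).trans (one_smul k b).symm))

end SubmoduleStabilizer
section Subrepresentations

variable {k G V : Type*} [Field k] [Monoid G] [AddCommGroup V] [Module k V]
  {σ : Representation k G V}

theorem exists_isAtom_le_not_le [σ.IsSemisimpleRepresentation] {S T : Subrepresentation σ}
    (hST : ¬ S ≤ T) : ∃ A, IsAtom A ∧ A ≤ S ∧ ¬ A ≤ T := by
  have := σ.isSemisimpleRepresentation_iff_isSemisimpleModule_asModule.mp ‹_›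
  let e : Subrepresentation σ ≃o Submodule (MonoidAlgebra k G) σ.asModule :=
    Subrepresentation.subrepresentationSubmoduleOrderIso
  have hle : ¬ e S ≤ e T := mt e.le_iff_le.mp hST
  rw [le_iff_atom_le_imp] at hle
  push Not at hle
  obtain ⟨A, hA, hAS, hAT⟩ := hle
  obtain ⟨A, rfl⟩ := e.surjective A
  exact ⟨A, (e.isAtom_iff A).mp hA, e.le_iff_le.mp hAS, mt e.le_iff_le.mpr hAT⟩

theorem isIrreducible_toRepresentation_of_isAtom {A : Subrepresentation σ} (hA : IsAtom A) :
    A.toRepresentation.IsIrreducible := by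
  have hinj := Submodule.map_injective_of_injective A.toSubmodule.injective_subtype
  refine { exists_pair_ne := ⟨⊥, ⊤, fun h ↦ hA.1 ?_⟩, eq_bot_or_eq_top := fun T ↦ ?_ }
  · have hbot : (⊥ : Submodule k A.toSubmodule) = ⊤ := congrArg Subrepresentation.toSubmodule h
    refine Subrepresentation.toSubmodule_injective ?_
    exact (Submodule.map_subtype_top A.toSubmodule).symm.trans
      ((congrArg (Submodule.map A.toSubmodule.subtype) hbot.symm).trans (Submodule.map_bot _))
  · let T' : Subrepresentation σ :=
      ⟨T.toSubmodule.map A.toSubmodule.subtype, by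
        rintro g _ ⟨u, hu, rfl⟩
        exact ⟨_, T.apply_mem_toSubmodule g hu, rfl⟩⟩
    have hT' : T' ≤ A := Submodule.map_subtype_le A.toSubmodule T.toSubmodule
    refine (hA.le_iff.mp hT').imp (fun h ↦ ?_) (fun h ↦ ?_) <;>
      refine Subrepresentation.toSubmodule_injective (hinj ?_)
    · exact (congrArg Subrepresentation.toSubmodule h).trans (Submodule.map_bot _).symm
    · exact (congrArg Subrepresentation.toSubmodule h).trans
        (Submodule.map_subtype_top A.toSubmodule).symm

end Subrepresentations

section Characters

open scoped ComplexConjugate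

open Module

open scoped ComplexOrder in
theorem exists_posDef_conjTranspose_mul_mul_eq {𝕜 G n : Type*} [RCLike 𝕜] [Group G] [Finite G]
    [Fintype n] [DecidableEq n] (M : G →* Matrix n n 𝕜) :
    ∃ P : Matrix n n 𝕜, P.PosDef ∧ ∀ g, (M g).conjTranspose * P * M g = P := by
  have := Fintype.ofFinite G
  refine ⟨∑ g, (M g).conjTranspose * M g, ?_, fun h ↦ ?_⟩
  · rw [← Finset.add_sum_erase _ _ (Finset.mem_univ 1), map_one, Matrix.conjTranspose_one, mul_one]
    exact Matrix.PosDef.one.add_posSemidef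
      (Matrix.posSemidef_sum _ fun g _ ↦ Matrix.posSemidef_conjTranspose_mul_self _)
  · simp only [Finset.mul_sum, Finset.sum_mul]
    refine Fintype.sum_equiv (Equiv.mulRight h) _ _ fun g ↦ ?_
    simp [Matrix.conjTranspose_mul, mul_assoc]

open scoped ComplexOrder in
theorem trace_map_inv_eq_star {𝕜 G n : Type*} [RCLike 𝕜] [Group G] [Finite G] [Fintype n]
    [DecidableEq n] (M : G →* Matrix n n 𝕜) (g : G) : (M g⁻¹).trace = star (M g).trace := by
  obtain ⟨P, hP, hinv⟩ := exists_posDef_conjTranspose_mul_mul_eq M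
  have hdet : IsUnit P.det := (Matrix.isUnit_iff_isUnit_det P).mp hP.isUnit
  have hconj : (M g).conjTranspose = P * M g⁻¹ * P⁻¹ := by
    calc (M g).conjTranspose = (M g).conjTranspose * P * P⁻¹ :=
          (Matrix.mul_nonsing_inv_cancel_right P _ hdet).symm
      _ = (M g).conjTranspose * P * M g * M g⁻¹ * P⁻¹ := by
          rw [mul_assoc _ (M g), ← map_mul, mul_inv_cancel, map_one, mul_one]
      _ = P * M g⁻¹ * P⁻¹ := by rw [hinv]
  rw [← Matrix.trace_conjTranspose, hconj, Matrix.trace_mul_comm, ← mul_assoc,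
    Matrix.nonsing_inv_mul P hdet, one_mul]

theorem character_inv_eq_star {𝕜 G V : Type*} [RCLike 𝕜] [Group G] [Finite G] [AddCommGroup V]
    [Module 𝕜 V] [FiniteDimensional 𝕜 V] (ρ : Representation 𝕜 G V) (g : G) :
    ρ.character g⁻¹ = star (ρ.character g) := by
  let b := finBasis 𝕜 V
  have := trace_map_inv_eq_star ((LinearMap.toMatrixAlgEquiv b).toMulEquiv.toMonoidHom.comp ρ) g
  rw [Representation.character, Representation.character, LinearMap.trace_eq_matrix_trace 𝕜 b,
    LinearMap.trace_eq_matrix_trace 𝕜 b]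
  exact this

theorem character_mul_conj_character {𝕜 G V : Type*} [RCLike 𝕜] [Group G] [Finite G]
    [AddCommGroup V] [Module 𝕜 V] [FiniteDimensional 𝕜 V] (ρ : Representation 𝕜 G V) :
    (fun g ↦ ρ.character g * conj (ρ.character g)) = (ρ.linHom ρ).character := by
  ext g
  rw [Representation.char_linHom, character_inv_eq_star, mul_comm, starRingEnd_apply]

theorem coe_ker_subset_charKer {G V : Type} [Group G] [AddCommGroup V] [Module ℂ V]
    (ρ : Representation ℂ G V) : (MonoidHom.ker ρ : Set G) ⊆ charKer G ρ.character := fun _ hg ↦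
  congrArg (LinearMap.trace ℂ V) ((MonoidHom.mem_ker.mp hg).trans (map_one ρ).symm)

theorem fixedSubmodule_eq_top_iff_forall_character_eq {k G V : Type*} [Field k] [CharZero k]
    [Group G] [Finite G] [AddCommGroup V] [Module k V] [FiniteDimensional k V]
    (ρ : Representation k G V) (X : Subgroup G) :
    fixedSubmodule ρ X = ⊤ ↔ ∀ x ∈ X, ρ.character x = ρ.character 1 := by
  refine ⟨fun h x hx ↦ ?_, fun h ↦ ?_⟩
  · have : ρ x = 1 := LinearMap.ext fun v ↦
      mem_fixedSubmodule.mp (h ▸ Submodule.mem_top : v ∈ fixedSubmodule ρ X) hx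
    rw [Representation.character, Representation.character, this, map_one ρ]
  · have := Fintype.ofFinite X
    have hcard : (Nat.card X : k) ≠ 0 := by simp
    have := invertibleOfNonzero hcard
    let ρX : Representation k X V := ρ.comp X.subtype
    have hdim := ρX.card_inv_mul_sum_char_eq_finrank
    have hchar (x : X) : ρX.character x = finrank k V :=
      (h x x.2).trans ρ.char_one
    simp only [hchar, Finset.sum_const, Finset.card_univ, nsmul_eq_mul, ← Nat.card_eq_fintype_card,
      inv_mul_cancel_left₀ hcard] at hdim
    exact Submodule.eq_top_of_finrank_eq (Nat.cast_injective hdim.symm)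

variable {G : Type} [Group G] [Fintype G]

theorem charInner_of_isIrrChar {α β : G → ℂ} (hα : IsIrrChar G α) (hβ : IsIrrChar G β) :
    charInner G α β = if α = β then 1 else 0 := by
  obtain ⟨A, hA, rfl⟩ := hα
  obtain ⟨B, hB, rfl⟩ := hβ
  have := invertibleOfNonzero (NeZero.ne (Nat.card G : ℂ))
  have horth (A B : FDRep ℂ G) [CategoryTheory.Simple A] [CategoryTheory.Simple B] :
      charInner G A.character B.character = if Nonempty (A ≅ B) then 1 else 0 := by
    rw [← FDRep.char_orthonormal, charInner, Nat.card_eq_fintype_card]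
    congr! 3 with g
    exact (character_inv_eq_star B.ρ g).symm
  refine (horth A B).trans (if_congr ⟨fun ⟨i⟩ ↦ FDRep.char_iso i, fun h ↦ ?_⟩ rfl rfl)
  by_contra hiso
  have := horth A B
  rw [h, horth B B, if_pos ⟨CategoryTheory.Iso.refl B⟩, if_neg hiso] at this
  exact one_ne_zero this

variable (G) in
theorem finite_setOf_isIrrChar : {α : G → ℂ | IsIrrChar G α}.Finite := by
  let inner (β : G → ℂ) : Dual ℂ (G → ℂ) :=
    { toFun := fun φ ↦ charInner G φ β
      map_add' := fun φ ψ ↦ by simp [charInner, add_mul, Finset.sum_add_distrib, mul_add]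
      map_smul' := fun c φ ↦ by simp [charInner, Finset.mul_sum, mul_assoc, mul_left_comm c] }
  refine LinearIndependent.setFinite (R := ℂ) <|
    LinearIndependent.of_pairwise_dual_eq_zero_one _ (fun β : {α | IsIrrChar G α} ↦ inner β)
      (fun β α h ↦ ?_) fun α ↦ ?_
  · exact (charInner_of_isIrrChar α.2 β.2).trans (if_neg fun h' ↦ h (Subtype.ext h'.symm))
  · exact (charInner_of_isIrrChar α.2 α.2).trans (if_pos rfl)

variable {V W : Type} [AddCommGroup V] [Module ℂ V] [FiniteDimensional ℂ V] [AddCommGroup W]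
  [Module ℂ W] [FiniteDimensional ℂ W]

theorem isIrrChar_character (ρ : Representation ℂ G V) [ρ.IsIrreducible] :
    IsIrrChar G ρ.character := by
  have hcard := NeZero.ne (Nat.card G : ℂ)
  have := invertibleOfNonzero hcard
  refine ⟨FDRep.of ρ, (FDRep.simple_iff_char_is_norm_one _).mpr ?_, rfl⟩
  have hnorm := ρ.char_orthonormal ρ
  rw [if_pos ⟨.refl ρ⟩, inv_mul_eq_one₀ hcard] at hnorm
  exact hnorm.symm

theorem charInner_character (ρ : Representation ℂ G V) (σ : Representation ℂ G W) :
    charInner G σ.character ρ.character = finrank ℂ (Representation.IntertwiningMap ρ σ) := by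
  have := invertibleOfNonzero (NeZero.ne (Nat.card G : ℂ))
  rw [← Representation.card_inv_mul_sum_char_mul_char_eq_finrank, charInner,
    Nat.card_eq_fintype_card]
  simp only [character_inv_eq_star, starRingEnd_apply]

end Characters

section Constituents

theorem le_fixedSubrepresentation_iff_subset_charKer {G V : Type} [Group G] [Finite G]
    [AddCommGroup V] [Module ℂ V] [FiniteDimensional ℂ V] {σ : Representation ℂ G V}
    {X : Subgroup G} [X.Normal] {A : Subrepresentation σ} :
    A ≤ fixedSubrepresentation σ X ↔ (X : Set G) ⊆ charKer G A.toRepresentation.character := by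
  refine Iff.trans ?_
    (fixedSubmodule_eq_top_iff_forall_character_eq A.toRepresentation X)
  rw [Submodule.eq_top_iff']
  exact ⟨fun h v x ↦ Subtype.ext (h v.2 x), fun h v hv x ↦ congrArg Subtype.val (h ⟨v, hv⟩ x)⟩

variable {G V : Type} [Group G] [Fintype G] [AddCommGroup V] [Module ℂ V] [FiniteDimensional ℂ V]
  {ρ : Representation ℂ G V} {X Y : Subgroup G}

variable (X) in
/-- The non-principal irreducible constituents of `χ · conj χ` having `X` in their kernel: the
part of the set counted by `etaChar` that is still available above `X`. -/
def constituentsTrivialOn (χ : G → ℂ) : Set (G → ℂ) :=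
  {α | IsIrrChar G α ∧ α ≠ (fun _ ↦ 1) ∧
    charInner G (fun g ↦ χ g * (starRingEnd ℂ) (χ g)) α ≠ 0 ∧ (X : Set G) ⊆ charKer G α}

theorem ncard_constituentsTrivialOn_le_etaChar (χ : G → ℂ) :
    (constituentsTrivialOn X χ).ncard ≤ etaChar G χ :=
  Set.ncard_le_ncard (fun _ hα ↦ ⟨hα.1, hα.2.1, hα.2.2.1⟩)
    ((finite_setOf_isIrrChar G).subset fun _ hα ↦ hα.1)

theorem exists_mem_constituentsTrivialOn_notMem [X.Normal] [Y.Normal]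
    (hY : ¬ Y ≤ commutantClosure ρ X) :
    ∃ α ∈ constituentsTrivialOn X ρ.character, α ∉ constituentsTrivialOn Y ρ.character := by
  have hle : ¬ fixedSubrepresentation (ρ.linHom ρ) X ≤ fixedSubrepresentation (ρ.linHom ρ) Y :=
    fun h ↦ hY (le_iInf₂ fun f hf ↦ mem_fixedSubmodule.mp (h hf))
  obtain ⟨A, hA, hAX, hAY⟩ := exists_isAtom_le_not_le hle
  have := isIrreducible_toRepresentation_of_isAtom hA
  rw [le_fixedSubrepresentation_iff_subset_charKer] at hAX hAY
  refine ⟨A.toRepresentation.character, ⟨isIrrChar_character _, fun h ↦ hAY ?_, ?_, hAX⟩,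
    fun h ↦ hAY h.2.2.2⟩
  · exact fun g _ ↦ (congrFun h g).trans (congrFun h 1).symm
  · rw [character_mul_conj_character, charInner_character, Nat.cast_ne_zero]
    let ι : A.toRepresentation.IntertwiningMap (ρ.linHom ρ) :=
      ⟨A.toSubmodule.subtype, fun _ ↦ rfl⟩
    have hι : ι ≠ 0 := fun h ↦ hA.1 <| Subrepresentation.toSubmodule_injective <| by
      have hsubtype : A.toSubmodule.subtype = 0 :=
        congrArg Representation.IntertwiningMap.toLinearMap h
      exact A.toSubmodule.range_subtype.symm.trans (LinearMap.range_eq_bot.mpr hsubtype)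
    have : Nontrivial (A.toRepresentation.IntertwiningMap (ρ.linHom ρ)) := ⟨ι, 0, hι⟩
    exact Module.finrank_pos.ne'

theorem ncard_constituentsTrivialOn_lt [X.Normal] [Y.Normal] (hXY : X ≤ Y)
    (hY : ¬ Y ≤ commutantClosure ρ X) :
    (constituentsTrivialOn Y ρ.character).ncard < (constituentsTrivialOn X ρ.character).ncard := by
  obtain ⟨α, hαX, hαY⟩ := exists_mem_constituentsTrivialOn_notMem hY
  have hsub : constituentsTrivialOn Y ρ.character ⊆ constituentsTrivialOn X ρ.character :=
    fun _ h ↦ ⟨h.1, h.2.1, h.2.2.1, Set.Subset.trans hXY h.2.2.2⟩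
  exact Set.ncard_lt_ncard ⟨hsub, fun h ↦ hαY (h hαX)⟩
    ((finite_setOf_isIrrChar G).subset fun _ hα ↦ hα.1)

end Constituents

section DerivedLength

variable {G V : Type} [Group G] [Fintype G] [AddCommGroup V] [Module ℂ V] [FiniteDimensional ℂ V]
  {ρ : Representation ℂ G V}

theorem ncard_constituentsTrivialOn_commutantClosure_lt {X : Subgroup G} [X.Normal] {y : G}
    (hy : (X ⊔ Subgroup.zpowers y).Normal) (hyX : y ∉ commutantClosure ρ X) :
    (constituentsTrivialOn (commutantClosure ρ (X ⊔ Subgroup.zpowers y)) ρ.character).ncard <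
      (constituentsTrivialOn X ρ.character).ncard := by
  have hle := le_fixClosure (σ := ρ.linHom ρ) (X ⊔ Subgroup.zpowers y)
  exact ncard_constituentsTrivialOn_lt (le_sup_left.trans hle) fun h ↦
    hyX (h (hle (Subgroup.mem_sup_right (Subgroup.mem_zpowers y))))

theorem derivedSeries_two_mul_le_of_commutantClosure_le (hss : IsSupersolvableGroup G) {n : ℕ}
    {X : Subgroup G} [X.Normal] (hX : commutantClosure ρ X ≤ X)
    (hn : (constituentsTrivialOn X ρ.character).ncard ≤ n) : derivedSeries G (2 * n) ≤ X := by
  induction n generalizing X with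
  | zero =>
    by_contra hDX
    have := ncard_constituentsTrivialOn_lt (ρ := ρ) (le_top : X ≤ ⊤) fun h ↦ hDX (h.trans hX)
    omega
  | succ m ih =>
    by_contra hDX
    obtain ⟨y, hyD, hyX, hy⟩ := hss.exists_sup_zpowers_normal hDX
    have hlt := ncard_constituentsTrivialOn_commutantClosure_lt hy fun h ↦ hyX (hX h)
    have hD : derivedSeries G (2 * m) ≤ commutantClosure ρ (X ⊔ Subgroup.zpowers y) :=
      ih (fixClosure_idem _).le (by omega)
    have hcomm : ∀ w ∈ derivedSeries G (2 * m + 1), ⁅y, w⁆ ∈ X := fun w hw ↦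
      commutatorElement_mem_of_sup_zpowers_normal hy <|
        derivedSeries_one G ▸ derivedSeries_antitone G (by omega) hw
    exact hyX <| hX <| mem_commutantClosure_of_mem_sup_commutator hcomm
      ((derivedSeries_antitone G (by omega)).trans hD) (Subgroup.mem_sup_right hyD)

theorem commutantClosure_bot_ne_top (hρ : IsIrrChar G ρ.character)
    (hdim : 1 < Module.finrank ℂ V) : commutantClosure ρ ⊥ ≠ ⊤ := by
  intro htop
  have hinv : (ρ.linHom ρ).invariants = ⊤ := Submodule.eq_top_iff'.mpr fun f g ↦
    fixClosure_le_vectorStabilizer bot_le (htop ▸ Subgroup.mem_top g : g ∈ commutantClosure ρ ⊥)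
  have hschur : Module.finrank ℂ (ρ.IntertwiningMap ρ) = 1 := by
    have := (charInner_character ρ ρ).symm.trans (charInner_of_isIrrChar hρ hρ)
    rw [if_pos rfl] at this
    exact_mod_cast this
  rw [← (Representation.invariantsEquivIntertwiningMap ρ ρ).finrank_eq, hinv, finrank_top,
    Module.finrank_linearMap] at hschur
  nlinarith

theorem derivedSeries_two_mul_etaChar_sub_one_le (hss : IsSupersolvableGroup G)
    (hρ : IsIrrChar G ρ.character) (hdim : 1 < Module.finrank ℂ V) :
    derivedSeries G (2 * etaChar G ρ.character - 1) ≤ MonoidHom.ker ρ := by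
  have hZ : ¬ ⊤ ≤ commutantClosure ρ ⊥ := fun h ↦
    commutantClosure_bot_ne_top hρ hdim (top_le_iff.mp h)
  obtain ⟨y, -, hyZ, hy⟩ := hss.exists_sup_zpowers_normal hZ
  have hlt := ncard_constituentsTrivialOn_commutantClosure_lt hy fun h ↦
    hyZ ((fixClosure_idem _).le h)
  have hη := ncard_constituentsTrivialOn_le_etaChar (X := commutantClosure ρ ⊥) ρ.character
  have hD : derivedSeries G (2 * (etaChar G ρ.character - 1)) ≤
      commutantClosure ρ (commutantClosure ρ ⊥ ⊔ Subgroup.zpowers y) :=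
    derivedSeries_two_mul_le_of_commutantClosure_le hss (fixClosure_idem _).le (by omega)
  have hsucc : 2 * etaChar G ρ.character - 1 = 2 * (etaChar G ρ.character - 1) + 1 := by omega
  rw [hsucc, derivedSeries_succ]
  exact (Subgroup.commutator_mono hD hD).trans (commutator_commutantClosure_sup_zpowers_le_ker y)

end DerivedLength

/-- For supersolvable `G` and `χ ∈ Irr(G)` with `χ(1) > 1`,
`dl(G/Ker χ) ≤ 2·η(χ) - 1`. -/
theorem derivedLength_le_two_eta_sub_one (G : Type) [Group G] [Fintype G]
    (hss : IsSupersolvableGroup G) (χ : G → ℂ) (hχ : IsIrrChar G χ)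
    (hdeg : 1 < (χ 1).re)
    (K : Subgroup G) [K.Normal] (hK : (K : Set G) = charKer G χ) :
    derivedLength (G ⧸ K) ≤ 2 * etaChar G χ - 1 := by
  obtain ⟨W, -, rfl⟩ := id hχ
  have hdim : 1 < Module.finrank ℂ W := by
    rw [FDRep.char_one, Complex.natCast_re] at hdeg
    exact_mod_cast hdeg
  have hle : derivedSeries G (2 * etaChar G W.character - 1) ≤ K := by
    rw [← SetLike.coe_subset_coe, hK]
    exact Set.Subset.trans (derivedSeries_two_mul_etaChar_sub_one_le hss hχ hdim)
      (coe_ker_subset_charKer W.ρ)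
  refine Nat.sInf_le ?_
  rwa [Set.mem_ofPred_eq, ← map_derivedSeries_eq (QuotientGroup.mk'_surjective K),
    Subgroup.map_eq_bot_iff, QuotientGroup.ker_mk']
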